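/- Let R be a reduced commutative ring whose only idempotents are 0 and 1 (so Spec R is connected), let n ≥ 1, and let (L_i)_{i∈ℤ} be a complete periodic lattice chain in R((u))^{2n}. If there exists a ∈ R((u))^× such that L_i^∨ = a·L_{-i} for all i ∈ ℤ, then there exists r ∈ ℤ such that L_i^∨ = u^r·L_{-i} for all i ∈ ℤ. -/

import Mathlib

noncomputable section
namespace Pap

variable (R : Type*) [CommRing R]

/-- `u^m` as a Laurent series. -/
def U (m : ℤ) : LaurentSeries R := HahnSeries.single m 1

/-- `R[[u]]` as a `R[[u]]`-submodule of `R((u))`. -/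
def psRange : Submodule (PowerSeries R) (LaurentSeries R) :=
  LinearMap.range (Algebra.linearMap (PowerSeries R) (LaurentSeries R))

variable (n : ℕ)

/-- `R((u))^n`. -/
abbrev V := Fin n → LaurentSeries R

instance (priority := 10000) : AddCommGroup (V R n) := Pi.addCommGroup
instance (priority := 10000) : Module (PowerSeries R) (V R n) := Pi.module _ _ _
instance (priority := 10000) : Module (LaurentSeries R) (V R n) := Pi.module _ _ _

/-- Multiplication by a Laurent series, as an `R[[u]]`-linear endomorphism of `R((u))^n`. -/
def smulV (a : LaurentSeries R) : V R n →ₗ[PowerSeries R] V R n where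
  toFun x := a • x
  map_add' x y := smul_add a x y
  map_smul' c x := by
    funext i
    change a • c • x i = c • a • x i
    simp only [Pi.smul_apply, RingHom.id_apply, smul_eq_mul, Algebra.smul_def]
    ring

/-- Image of a submodule under multiplication by a Laurent series. -/
def scaleL (a : LaurentSeries R) (L : Submodule (PowerSeries R) (V R n)) :
    Submodule (PowerSeries R) (V R n) := L.map (smulV R n a)

/-- The standard lattice `R[[u]]^n`. -/
def stdLat : Submodule (PowerSeries R) (V R n) := Submodule.pi Set.univ fun _ => psRange R

/-- The quotient `B/(A ∩ B)`; for `A ≤ B` this is `B/A`. -/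
abbrev subQuot (A B : Submodule (PowerSeries R) (V R n)) :=
  B ⧸ (A.comap B.subtype)

/-- A lattice in `R((u))^n`. -/
def IsLattice (L : Submodule (PowerSeries R) (V R n)) : Prop :=
  ∃ N : ℕ, scaleL R n (U R N) (stdLat R n) ≤ L ∧ L ≤ scaleL R n (U R (-(N : ℤ))) (stdLat R n) ∧
    Module.Finite R (RestrictScalars R (PowerSeries R)
      (subQuot R n L (scaleL R n (U R (-(N : ℤ))) (stdLat R n)))) ∧
    Module.Projective R (RestrictScalars R (PowerSeries R)
      (subQuot R n L (scaleL R n (U R (-(N : ℤ))) (stdLat R n))))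

/-- Rank one finite locally free module. -/
def RankOne (A : Type*) [CommRing A] (Q : Type*) [AddCommGroup Q] [Module A Q] : Prop :=
  Module.Finite A Q ∧ Module.Projective A Q ∧
    ∀ (P : Ideal A) [P.IsPrime],
      Module.finrank (Localization P.primeCompl) (LocalizedModule P.primeCompl Q) = 1

/-- Exponent of `u` bounding the `t`-th coordinate of the `j`-th standard lattice. -/
def dex (j : ℤ) (t : Fin n) : ℤ := (j - ((t : ℤ) + 1)) / n + 1

/-- The standard lattice chain `Λ̃_j`, `j ∈ ℤ`. -/
def stdChain (j : ℤ) : Submodule (PowerSeries R) (V R n) :=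
  Submodule.span (PowerSeries R)
    (Set.range fun t : Fin n =>
      (fun s => if s = t then U R (-(dex n j t)) else 0 : V R n))

/-- A complete periodic lattice chain in `R((u))^n`. -/
def IsLatticeChain (L : ℤ → Submodule (PowerSeries R) (V R n)) : Prop :=
  (∀ i, IsLattice R n (L i)) ∧ (∀ i, L i ≤ L (i + 1)) ∧
    (∀ i, @RankOne R _ (RestrictScalars R (PowerSeries R) (subQuot R n (L i) (L (i + 1)))) _
      (RestrictScalars.module R (PowerSeries R) (subQuot R n (L i) (L (i + 1))))) ∧
    (∀ i, L ((n : ℤ) + i) = scaleL R n (U R (-1)) (L i))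

/-- The action of an invertible matrix over `R((u))` on `R[[u]]`-submodules of `R((u))^n`. -/
def glLat (g : GL (Fin n) (LaurentSeries R)) (L : Submodule (PowerSeries R) (V R n)) :
    Submodule (PowerSeries R) (V R n) :=
  L.map ((Matrix.mulVecLin (g : Matrix (Fin n) (Fin n) (LaurentSeries R))).restrictScalars
    (PowerSeries R))

/-- The symplectic matrix `J̃_{2n}`. -/
def Jt : Matrix (Fin (2 * n)) (Fin (2 * n)) (LaurentSeries R) :=
  Matrix.of fun i j =>
    if (i : ℕ) + (j : ℕ) = 2 * n - 1 then (if (i : ℕ) < n then 1 else -1) else 0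

/-- The bilinear form attached to a matrix `J`. -/
def formJ {m : ℕ} (J : Matrix (Fin m) (Fin m) (LaurentSeries R)) (x y : V R m) :
    LaurentSeries R :=
  dotProduct x (J.mulVec y)

/-- The dual of a lattice with respect to the form attached to `J`. -/
def dualLat {m : ℕ} (J : Matrix (Fin m) (Fin m) (LaurentSeries R))
    (L : Submodule (PowerSeries R) (V R m)) : Submodule (PowerSeries R) (V R m) where
  carrier := {x | ∀ y ∈ L, formJ R J x y ∈ psRange R}
  add_mem' {a b} ha hb y hy := by
    have : formJ R J (a + b) y = formJ R J a y + formJ R J b y := by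
      simp [formJ, add_dotProduct]
    rw [this]; exact Submodule.add_mem _ (ha y hy) (hb y hy)
  zero_mem' y hy := by
    have : formJ R J 0 y = 0 := by simp [formJ]
    rw [this]; exact Submodule.zero_mem _
  smul_mem' c a ha y hy := by
    have : formJ R J (c • a) y = c • formJ R J a y := by
      simp only [formJ, dotProduct, Pi.smul_apply, smul_mul_assoc]
      exact (Finset.smul_sum (r := c) (s := Finset.univ)
        (f := fun i => a i * J.mulVec y i)).symm
    rw [this]; exact Submodule.smul_mem _ c (ha y hy)

end Pap
end

/-!
Let `x` be a unit of `R((u))` with inverse `y`. Modulo every prime the leading coefficients of `x`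
and `y` multiply to `1`, so the element `x_i y_{-i}` of `R` is congruent to `1` if `i` is the order
of `x` modulo that prime, and to `0` otherwise. Since `R` is reduced, each `x_i y_{-i}` is
idempotent, hence `0` or `1` as `Spec R` is connected, and the order of `x` is the same modulo all
primes. Therefore `x = u^r v` with `v` a unit of `R[[u]]`, and multiplication by `v` maps every
`R[[u]]`-submodule of `R((u))^n` onto itself.
-/

namespace Pap

section HahnSeries

open HahnSeries

variable {Γ : Type*} [AddCommGroup Γ] [LinearOrder Γ] [IsOrderedAddMonoid Γ]
  {R : Type*} [CommRing R] {x y : HahnSeries Γ R}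

theorem order_eq_neg_order_of_mul_eq_one [IsDomain R] (hxy : x * y = 1) :
    y.order = -x.order := by
  refine eq_neg_of_add_eq_zero_right ?_
  rw [← order_mul (left_ne_zero_of_mul_eq_one hxy) (right_ne_zero_of_mul_eq_one hxy), hxy,
    order_one]

theorem coeff_mul_coeff_neg_of_mul_eq_one [IsDomain R] (hxy : x * y = 1) (i : Γ) :
    x.coeff i * y.coeff (-i) = if i = x.order then 1 else 0 := by
  have horder : y.order = -x.order := order_eq_neg_order_of_mul_eq_one hxy
  rcases lt_trichotomy i x.order with hi | rfl | hi
  · rw [coeff_eq_zero_of_lt_order hi, zero_mul, if_neg hi.ne]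
  · calc x.coeff x.order * y.coeff (-x.order)
        = (x * y).coeff (x.order + y.order) := by
          rw [coeff_mul_order_add_order, leadingCoeff_eq, leadingCoeff_eq, horder]
      _ = if x.order = x.order then 1 else 0 := by
          rw [hxy, horder, add_neg_cancel, coeff_one, if_pos rfl, if_pos rfl]
  · have hneg : -i < y.order := horder ▸ neg_lt_neg hi
    rw [coeff_eq_zero_of_lt_order hneg, mul_zero, if_neg hi.ne']

theorem map_coeff_mul_coeff_neg_of_mul_eq_one {D : Type*} [CommRing D] [IsDomain D] (f : R →+* D)
    (hxy : x * y = 1) (i : Γ) :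
    f (x.coeff i * y.coeff (-i)) = if i = (x.map f).order then 1 else 0 := by
  have hmap : x.map f * y.map f = 1 := calc
    x.map f * y.map f = (x * y).map f := (HahnSeries.map_mul f.toNonUnitalRingHom).symm
    _ = 1 := by rw [hxy]; exact HahnSeries.map_one f.toMonoidWithZeroHom
  rw [map_mul]
  exact coeff_mul_coeff_neg_of_mul_eq_one hmap i

theorem eq_of_forall_isPrime_mk_eq [IsReduced R] {a b : R}
    (h : ∀ p : Ideal R, p.IsPrime → Ideal.Quotient.mk p a = Ideal.Quotient.mk p b) : a = b :=
  sub_eq_zero.mp <| (nilpotent_iff_mem_prime.mpr fun p hp =>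
    Ideal.Quotient.eq.mp (h p hp)).eq_zero

theorem isIdempotentElem_coeff_mul_coeff_neg [IsReduced R] (hxy : x * y = 1) (i : Γ) :
    IsIdempotentElem (x.coeff i * y.coeff (-i)) := by
  refine eq_of_forall_isPrime_mk_eq fun p _ => ?_
  rw [map_mul, map_coeff_mul_coeff_neg_of_mul_eq_one _ hxy]
  split_ifs
  · exact one_mul 1
  · exact zero_mul 0

theorem exists_coeff_mul_coeff_neg_ne_zero [Nontrivial R] (hxy : x * y = 1) :
    ∃ i, x.coeff i * y.coeff (-i) ≠ 0 := by
  obtain ⟨p, hp⟩ := Ideal.exists_maximal R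
  have := hp.isPrime
  refine ⟨(x.map (Ideal.Quotient.mk p)).order, fun h => one_ne_zero (α := R ⧸ p) ?_⟩
  rw [← map_zero (Ideal.Quotient.mk p), ← h, map_coeff_mul_coeff_neg_of_mul_eq_one _ hxy,
    if_pos rfl]

theorem coeff_eq_zero_of_lt_of_coeff_mul_coeff_neg_eq_one [IsReduced R] (hxy : x * y = 1)
    {i j : Γ} (hi : x.coeff i * y.coeff (-i) = 1) (hj : j < i) : x.coeff j = 0 := by
  refine eq_of_forall_isPrime_mk_eq fun p _ => ?_
  have horder : i = (x.map (Ideal.Quotient.mk p)).order := by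
    by_contra hne
    have h := map_coeff_mul_coeff_neg_of_mul_eq_one (Ideal.Quotient.mk p) hxy i
    rw [hi, if_neg hne, map_one] at h
    exact one_ne_zero h
  rw [map_zero]
  exact coeff_eq_zero_of_lt_order (horder ▸ hj)

theorem isUnit_leadingCoeff_of_isUnit [IsReduced R]
    (hid : ∀ e : R, IsIdempotentElem e → e = 0 ∨ e = 1) (hx : IsUnit x) :
    IsUnit x.leadingCoeff := by
  nontriviality R
  obtain ⟨y, hxy⟩ := hx.exists_right_inv
  obtain ⟨i, hi⟩ := exists_coeff_mul_coeff_neg_ne_zero hxy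
  have hone : x.coeff i * y.coeff (-i) = 1 :=
    (hid _ (isIdempotentElem_coeff_mul_coeff_neg hxy i)).resolve_left hi
  have horder : x.order = i := by
    refine le_antisymm (order_le_of_coeff_ne_zero (left_ne_zero_of_mul hi)) ?_
    by_contra! hlt
    exact coeff_order_eq_zero.not.mpr hx.ne_zero
      (coeff_eq_zero_of_lt_of_coeff_mul_coeff_neg_eq_one hxy hone hlt)
  rw [leadingCoeff_eq, horder]
  exact .of_mul_eq_one _ hone

end HahnSeries

variable {R : Type*} [CommRing R]

theorem U_order_mul_powerSeriesPart (a : LaurentSeries R) :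
    U R a.order * algebraMap (PowerSeries R) (LaurentSeries R) a.powerSeriesPart = a :=
  a.single_order_mul_powerSeriesPart

theorem isUnit_powerSeriesPart {a : LaurentSeries R} (ha : IsUnit a.leadingCoeff) :
    IsUnit a.powerSeriesPart := by
  rw [PowerSeries.isUnit_iff_constantCoeff, ← PowerSeries.coeff_zero_eq_constantCoeff_apply,
    LaurentSeries.powerSeriesPart_coeff, Nat.cast_zero, add_zero, ← HahnSeries.leadingCoeff_eq]
  exact ha

variable {n : ℕ}

theorem scaleL_mul (a b : LaurentSeries R) (L : Submodule (PowerSeries R) (V R n)) :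
    scaleL R n (a * b) L = scaleL R n a (scaleL R n b L) := by
  have hcomp : smulV R n (a * b) = smulV R n a ∘ₗ smulV R n b :=
    LinearMap.ext fun x => mul_smul a b x
  rw [scaleL, hcomp, Submodule.map_comp]
  rfl

theorem smulV_algebraMap (f : PowerSeries R) (x : V R n) :
    smulV R n (algebraMap (PowerSeries R) (LaurentSeries R) f) x = f • x :=
  funext fun i => (Algebra.smul_def f (x i)).symm

theorem scaleL_algebraMap_of_isUnit {f : PowerSeries R} (hf : IsUnit f)
    (L : Submodule (PowerSeries R) (V R n)) :
    scaleL R n (algebraMap (PowerSeries R) (LaurentSeries R) f) L = L := by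
  obtain ⟨f, rfl⟩ := hf
  apply le_antisymm
  · rintro _ ⟨x, hx, rfl⟩
    rw [smulV_algebraMap]
    exact L.smul_mem _ hx
  · intro x hx
    refine ⟨(↑f⁻¹ : PowerSeries R) • x, L.smul_mem _ hx, ?_⟩
    rw [smulV_algebraMap, smul_smul, f.mul_inv, one_smul]

theorem scaleL_eq_scaleL_U_order {a : LaurentSeries R} (ha : IsUnit a.leadingCoeff)
    (L : Submodule (PowerSeries R) (V R n)) : scaleL R n a L = scaleL R n (U R a.order) L := by
  conv_lhs => rw [← U_order_mul_powerSeriesPart a, scaleL_mul,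
    scaleL_algebraMap_of_isUnit (isUnit_powerSeriesPart ha)]

end Pap

open Pap in
theorem stmt8_general {R : Type*} [CommRing R] [IsReduced R]
    (hid : ∀ e : R, IsIdempotentElem e → e = 0 ∨ e = 1) {n : ℕ}
    (J : Matrix (Fin n) (Fin n) (LaurentSeries R)) (L : ℤ → Submodule (PowerSeries R) (V R n))
    (hdual : ∃ a : (LaurentSeries R)ˣ, ∀ i : ℤ,
      dualLat R J (L i) = scaleL R n (a : LaurentSeries R) (L (-i))) :
    ∃ r : ℤ, ∀ i : ℤ, dualLat R J (L i) = scaleL R n (U R r) (L (-i)) := by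
  obtain ⟨a, ha⟩ := hdual
  have hlead : IsUnit (a : LaurentSeries R).leadingCoeff :=
    isUnit_leadingCoeff_of_isUnit hid a.isUnit
  exact ⟨(a : LaurentSeries R).order, fun i => (ha i).trans (scaleL_eq_scaleL_U_order hlead _)⟩

open Pap in
/-- Over a reduced connected base, a self-dual complete periodic lattice chain (with respect to
the standard symplectic form) is `r`-self-dual for some `r ∈ ℤ`. -/
theorem stmt8 (R : Type*) [CommRing R] [IsReduced R]
    (hid : ∀ e : R, IsIdempotentElem e → e = 0 ∨ e = 1)
    (n : ℕ) (hn : 1 ≤ n) (L : ℤ → Submodule (PowerSeries R) (V R (2 * n)))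
    (hL : IsLatticeChain R (2 * n) L)
    (hdual : ∃ a : (LaurentSeries R)ˣ, ∀ i : ℤ,
      dualLat R (Jt R n) (L i) = scaleL R (2 * n) (a : LaurentSeries R) (L (-i))) :
    ∃ r : ℤ, ∀ i : ℤ,
      dualLat R (Jt R n) (L i) = scaleL R (2 * n) (U R r) (L (-i)) :=
  stmt8_general hid (Jt R n) L hdual
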